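/- Let K : ℝ → ℝ be a bounded nonnegative function with bounded support, let f be a probability density continuous in a neighborhood of u, and let g : ℝ → ℝ be continuous in a neighborhood of u with ∫ |g(v)| f(v) dv < ∞. Then, for every nonnegative integer λ, as h → 0⁺, ∫ g(v) ((v − u)/h)^λ K_h(v − u) f(v) dv → μ_λ f(u) g(u), where K_h(t) = K(t/h)/h and μ_λ = ∫ t^λ K(t) dt. (Bias computation in the proof of Lemma 1: ES_{n,λ} = μ_λ f(u) g(u)(1 + o(1)).) -/

import Mathlib

open MeasureTheory Filter
open scoped Topology

noncomputable section

/-!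
For `h > 0`, the change of variables `v = u + h t` turns the integral into
`∫ t^λ K(t) (f g)(u + h t) dt` (`kernel_integral_eq`). The integrand vanishes off the bounded
support of `K`, and for small `h` the point `u + h t` stays in a neighbourhood of `u` on which
`f g` is bounded, uniformly over `t` in that support. Dominated convergence, with a constant on a
closed ball as the dominating function, then lets `h → 0⁺` under the integral sign.
-/

lemma kernel_integral_eq (K f g : ℝ → ℝ) (u : ℝ) (lam : ℕ) {h : ℝ} (hh : 0 < h) :
    ∫ v : ℝ, g v * ((v - u) / h)^lam * (K ((v - u) / h) / h) * f v
      = ∫ t : ℝ, t^lam * K t * (f (u + h * t) * g (u + h * t)) := by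
  have hne : h ≠ 0 := hh.ne'
  rw [← integral_add_left_eq_self
    (fun v : ℝ => g v * ((v - u) / h)^lam * (K ((v - u) / h) / h) * f v) u]
  have key := Measure.integral_comp_mul_left
    (fun x : ℝ => g (u + x) * ((u + x - u) / h)^lam * (K ((u + x - u) / h) / h) * f (u + x)) h
  rw [abs_of_pos (inv_pos.mpr hh), smul_eq_mul, eq_inv_mul_iff_mul_eq₀ hne] at key
  rw [← key, ← integral_const_mul]
  congr 1
  ext t
  have : (u + h * t - u) / h = t := by field_simp; ring
  rw [this]
  field_simp

/-- The bias computation in the proof of Lemma 1 of Zhang, Fan and Sun (2009):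
if `K` is a bounded nonnegative function with bounded support, `f` is a probability
density continuous near `u`, and `g` is continuous near `u` with `∫|g| f < ∞`, then for
every `λ ∈ ℕ`, as `h → 0⁺`,
`∫ g(v) ((v−u)/h)^λ K_h(v−u) f(v) dv → μ_λ f(u) g(u)`, where `K_h(t) = K(t/h)/h` and
`μ_λ = ∫ t^λ K(t) dt`. -/
theorem lemma1_bias
    (K f g : ℝ → ℝ) (u : ℝ) (lam : ℕ)
    -- K bounded, nonnegative, bounded support
    (hKbdd : ∃ M, ∀ t, |K t| ≤ M) (hKpos : ∀ t, 0 ≤ K t)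
    (hKsupp : Bornology.IsBounded (Function.support K))
    (hKmeas : Measurable K)
    -- f a probability density, continuous in a neighborhood of u
    (hfpos : ∀ x, 0 ≤ f x) (hfint : ∫ x : ℝ, f x = 1) (hfmeas : Measurable f)
    (hfcont : ∃ V ∈ 𝓝 u, ContinuousOn f V)
    -- g Borel measurable, continuous in a neighborhood of u, with ∫ |g| f < ∞
    (hgmeas : Measurable g) (hgcont : ∃ V ∈ 𝓝 u, ContinuousOn g V)
    (hint : Integrable (fun v => |g v| * f v)) :
    Tendsto
      (fun h : ℝ =>
        ∫ v : ℝ, g v * ((v - u) / h)^lam * (K ((v - u) / h) / h) * f v)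
      (𝓝[>] (0 : ℝ))
      (𝓝 ((∫ t : ℝ, t^lam * K t) * f u * g u)) := by
  obtain ⟨M, hM⟩ := hKbdd
  obtain ⟨R, hR⟩ := hKsupp.subset_closedBall (0 : ℝ)
  obtain ⟨V, hV, hfV⟩ := hfcont
  obtain ⟨W, hW, hgW⟩ := hgcont
  have hφ : ContinuousAt (fun x => f x * g x) u :=
    (hfV.continuousAt hV).mul (hgW.continuousAt hW)
  have hM0 : 0 ≤ M := (abs_nonneg _).trans (hM 0)
  set C : ℝ := |f u * g u| + 1
  obtain ⟨δ, hδ, hball⟩ := Metric.eventually_nhds_iff.mp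
    (hφ.abs.eventually (gt_mem_nhds (lt_add_one |f u * g u|)))
  have hsmall : ∀ᶠ h : ℝ in 𝓝[>] (0 : ℝ), h * (|R| + 1) < δ := by
    have h0 : Tendsto (fun h : ℝ => h * (|R| + 1)) (𝓝 0) (𝓝 (0 * (|R| + 1))) :=
      (continuous_id.mul continuous_const).tendsto 0
    rw [zero_mul] at h0
    exact (h0.mono_left nhdsWithin_le_nhds).eventually (gt_mem_nhds hδ)
  have hpos : ∀ᶠ h : ℝ in 𝓝[>] (0 : ℝ), 0 < h := self_mem_nhdsWithin
  have hlim : Tendsto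
      (fun h : ℝ => ∫ t : ℝ, t^lam * K t * (f (u + h * t) * g (u + h * t)))
      (𝓝[>] (0 : ℝ)) (𝓝 (∫ t : ℝ, t^lam * K t * (f u * g u))) := by
    apply tendsto_integral_filter_of_dominated_convergence
      ((Metric.closedBall (0 : ℝ) R).indicator fun _ => |R|^lam * M * C)
    · exact Eventually.of_forall fun h => by
        apply Measurable.aestronglyMeasurable
        fun_prop
    · filter_upwards [hsmall, hpos] with h hh hp
      refine Eventually.of_forall fun t => ?_
      by_cases ht : t ∈ Metric.closedBall (0 : ℝ) R
      · have htR : |t| ≤ |R| := by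
          rw [mem_closedBall_zero_iff, Real.norm_eq_abs] at ht
          exact ht.trans (le_abs_self R)
        have hd : dist (u + h * t) u < δ := by
          rw [Real.dist_eq, add_sub_cancel_left, abs_mul, abs_of_pos hp]
          refine lt_of_le_of_lt ?_ hh
          gcongr
          linarith
        have hC : |f (u + h * t) * g (u + h * t)| ≤ C := (hball hd).le
        rw [Set.indicator_of_mem ht, Real.norm_eq_abs, abs_mul, abs_mul, abs_pow]
        gcongr
        exact hM t
      · have hK : K t = 0 := by
          by_contra hne
          exact ht (hR hne)
        simp [Set.indicator_of_notMem ht, hK]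
    · exact (integrable_indicator_iff Metric.isClosed_closedBall.measurableSet).mpr
        (integrableOn_const (measure_closedBall_lt_top.ne))
    · refine Eventually.of_forall fun t => ?_
      have hline : Tendsto (fun h : ℝ => u + h * t) (𝓝[>] (0 : ℝ)) (𝓝 u) := by
        have h0 : Tendsto (fun h : ℝ => u + h * t) (𝓝 0) (𝓝 (u + 0 * t)) :=
          Continuous.tendsto (by fun_prop) 0
        rw [zero_mul, add_zero] at h0
        exact h0.mono_left nhdsWithin_le_nhds
      exact (hφ.tendsto.comp hline).const_mul (t^lam * K t)
  rw [integral_mul_const, ← mul_assoc] at hlim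
  refine hlim.congr' ?_
  filter_upwards [hpos] with h hh
  exact (kernel_integral_eq K f g u lam hh).symm
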